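/- arXiv:1211.0671 — 3 statements merged into one kernel-verified Lean document; each statement's English description precedes it below -/
import Mathlib

section
/- (Lemma 3.2(2)) For every integer m ∈ ℤ and all natural numbers a, b ∈ ℕ, the following identity holds in ℚ(v): [[m ∣ a]] · [[m ∣ b]] = Σ_{c=0}^{min(a,b)} v^{2(b−c)(a−c)} · [[m ∣ a+b−c]] · [[a+b−c ; c, a−c, b−c]]. -/
open Finset

noncomputable section

/-- The field `ℚ(v)` of rational functions over `ℚ`. -/
abbrev K : Type := RatFunc ℚ

/-- The indeterminate `v`. -/
def v : K := RatFunc.X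

/-- `[[i]] = (v^{2i} - 1)/(v^2 - 1)`. -/
def qqint (i : ℤ) : K := (v ^ (2 * i) - 1) / (v ^ (2 : ℤ) - 1)

/-- `[[t]]! = [[1]][[2]]⋯[[t]]`. -/
def qqfact (t : ℕ) : K := ∏ s ∈ Finset.range t, qqint (s + 1)

/-- The Gaussian binomial coefficient `[[N ∣ t]] = ([[N]][[N-1]]⋯[[N-t+1]])/[[t]]!`. -/
def qqbinom (N : ℤ) (t : ℕ) : K := (∏ s ∈ Finset.range t, qqint (N - s)) / qqfact t

/-- The q-trinomial coefficient `[[a+b+c ; a, b, c]] = [[a+b+c]]!/([[a]]![[b]]![[c]]!)`. -/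
def qqtri (a b c : ℕ) : K := qqfact (a + b + c) / (qqfact a * qqfact b * qqfact c)

/-!
Write `[x ∣ n]` for the Gaussian binomials and `q = v ^ 2`. The `q`-Vandermonde convolution, applied
to `m = a + (m - a)`, expands `[m ∣ b]` as `∑ q ^ ((a - c) * (b - c)) [a ∣ c] [m - a ∣ b - c]`.
Multiplied by `[m ∣ a]`, each term collapses, because the descending product for `m - a` continues
the one for `m`. The convolution itself follows by induction on `b` from the cocycle identity
`[x + y] = [x] + q ^ x [y]`, the only property of `q`-integers that is needed besides `[n] ≠ 0` for
`0 < n`.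
-/

section Products

variable {M : Type*} [CommMonoid M] (f : ℤ → M)

/-- The factorial `f 1 * f 2 * ⋯ * f n` attached to a sequence `f`; it is the `q`-factorial when `f`
is the sequence of `q`-integers. -/
def qFactorial (n : ℕ) : M := ∏ s ∈ range n, f (s + 1)

/-- The falling factorial `f x * f (x - 1) * ⋯ * f (x - n + 1)` attached to a sequence `f`; it is
the numerator of a Gaussian binomial coefficient when `f` is the sequence of `q`-integers. -/
def qDescFactorial (x : ℤ) (n : ℕ) : M := ∏ s ∈ range n, f (x - s)

theorem qFactorial_succ (n : ℕ) : qFactorial f (n + 1) = qFactorial f n * f (n + 1) :=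
  prod_range_succ _ n

theorem qDescFactorial_succ (x : ℤ) (n : ℕ) :
    qDescFactorial f x (n + 1) = qDescFactorial f x n * f (x - n) :=
  prod_range_succ _ n

theorem qDescFactorial_add (x : ℤ) (i j : ℕ) :
    qDescFactorial f x (i + j) = qDescFactorial f x i * qDescFactorial f (x - i) j := by
  simp only [qDescFactorial, prod_range_add, Nat.cast_add, sub_sub]

theorem qDescFactorial_self (n : ℕ) : qDescFactorial f n n = qFactorial f n := by
  rw [qDescFactorial, qFactorial, ← prod_range_reflect]
  refine prod_congr rfl fun s hs ↦ congrArg f ?_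
  have := mem_range.mp hs
  omega

theorem qDescFactorial_add_mul_qFactorial (i j : ℕ) :
    qDescFactorial f (i + j) i * qFactorial f j = qFactorial f (i + j) := by
  have split := qDescFactorial_add f (i + j) i j
  rw [add_sub_cancel_left, qDescFactorial_self, ← Nat.cast_add, qDescFactorial_self] at split
  rw [split, Nat.cast_add]

end Products

theorem qDescFactorial_eq_zero_of_lt {M : Type*} [CommMonoidWithZero M] {f : ℤ → M}
    (hf : f 0 = 0) {n k : ℕ} (h : n < k) : qDescFactorial f n k = 0 :=
  prod_eq_zero (mem_range.mpr h) (by rw [sub_self, hf])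

section Field

variable {F : Type*} [Field F]

/-- The Gaussian binomial coefficient `[x ∣ n]`, formed with `f i` in place of the `q`-integer
`[i]`. -/
def qBinom (f : ℤ → F) (x : ℤ) (n : ℕ) : F := qDescFactorial f x n / qFactorial f n

/-- The trinomial coefficient `[i + j + k ; i, j, k]`, formed with `f i` in place of the `q`-integer
`[i]`. -/
def qTrinom (f : ℤ → F) (i j k : ℕ) : F :=
  qFactorial f (i + j + k) / (qFactorial f i * qFactorial f j * qFactorial f k)

@[simp]
theorem qBinom_zero_right (f : ℤ → F) (x : ℤ) : qBinom f x 0 = 1 := by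
  simp [qBinom, qDescFactorial, qFactorial]

theorem qBinom_mul_qBinom_sub (f : ℤ → F) (x : ℤ) (i j : ℕ) :
    qBinom f x i * qBinom f (x - i) j =
      qDescFactorial f x (i + j) / (qFactorial f i * qFactorial f j) := by
  rw [qBinom, qBinom, div_mul_div_comm, qDescFactorial_add]

/-- `f` is a sequence of `q`-integers with no vanishing positive term, axiomatised by the cocycle
identity, which determines `f` up to the factor `f 1`. Besides `i ↦ (q ^ i - 1) / (q - 1)` this
covers the classical case `q = 1`, where `f` is the cast into a field of characteristic zero. -/
structure IsQInteger (q : F) (f : ℤ → F) : Prop where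
  map_add (x y : ℤ) : f (x + y) = f x + q ^ x * f y
  map_succ_ne_zero (n : ℕ) : f (n + 1) ≠ 0

theorem isQInteger_zpow_sub_one_div {q : F} (hq₀ : q ≠ 0) (hq : ∀ n : ℕ, q ^ (n + 1) ≠ 1) :
    IsQInteger q fun i ↦ (q ^ i - 1) / (q - 1) where
  map_add x y := by
    rw [zpow_add₀ hq₀]
    ring
  map_succ_ne_zero n :=
    div_ne_zero (sub_ne_zero.mpr (mod_cast hq n)) (sub_ne_zero.mpr (by simpa using hq 0))

namespace IsQInteger

variable {q : F} {f : ℤ → F}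

theorem map_zero (hf : IsQInteger q f) : f 0 = 0 := by
  simpa using hf.map_add 0 0

theorem ne_zero (hf : IsQInteger q f) : q ≠ 0 := by
  rintro rfl
  have f_one : f 1 = 0 := by simpa [hf.map_zero] using (hf.map_add 1 (-1)).symm
  exact hf.map_succ_ne_zero 0 (by simpa using f_one)

theorem qFactorial_ne_zero (hf : IsQInteger q f) (n : ℕ) : qFactorial f n ≠ 0 :=
  prod_ne_zero_iff.mpr fun s _ ↦ hf.map_succ_ne_zero s

theorem qBinom_succ_mul (hf : IsQInteger q f) (x : ℤ) (n : ℕ) :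
    qBinom f x (n + 1) * f (n + 1) = qBinom f x n * f (x - n) := by
  have := hf.map_succ_ne_zero n
  have := hf.qFactorial_ne_zero n
  rw [qBinom, qBinom, qDescFactorial_succ, qFactorial_succ]
  field_simp

theorem qBinom_natCast_add (hf : IsQInteger q f) (i j : ℕ) :
    qBinom f (i + j) i = qFactorial f (i + j) / (qFactorial f i * qFactorial f j) := by
  rw [qBinom, ← qDescFactorial_add_mul_qFactorial, mul_div_mul_right _ _ (hf.qFactorial_ne_zero j)]

theorem qBinom_eq_zero_of_lt (hf : IsQInteger q f) {n k : ℕ} (h : n < k) : qBinom f n k = 0 := by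
  rw [qBinom, qDescFactorial_eq_zero_of_lt hf.map_zero h, zero_div]

theorem qBinom_add_mul_eq_mul_qTrinom (hf : IsQInteger q f) (x : ℤ) (i j k : ℕ) :
    qBinom f (i + j) i * (qBinom f x (i + j) * qBinom f (x - (i + j)) k) =
      qBinom f x (i + j + k) * qTrinom f i j k := by
  have collapse := qBinom_mul_qBinom_sub f x (i + j) k
  rw [Nat.cast_add] at collapse
  have := hf.qFactorial_ne_zero (i + j)
  have := hf.qFactorial_ne_zero (i + j + k)
  rw [collapse, hf.qBinom_natCast_add, qBinom, qTrinom]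
  field_simp

/-- One summand in the inductive step of `qVandermonde`: the two terms on the right increase `i` and
`j`, respectively. -/
theorem qBinom_mul_qBinom_mul_eq_add (hf : IsQInteger q f) (x y : ℤ) (i j : ℕ) :
    q ^ ((x - i) * j) * qBinom f x i * qBinom f y j * f (x + y - (i + j)) =
      q ^ ((x - (i + 1)) * j) * qBinom f x (i + 1) * qBinom f y j * (q ^ j * f (i + 1)) +
      q ^ ((x - i) * (j + 1)) * qBinom f x i * qBinom f y (j + 1) * f (j + 1) := by
  have cocycle : f (x + y - (i + j)) = f (x - i) + q ^ (x - i) * f (y - j) := by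
    rw [← hf.map_add, add_sub_add_comm]
  have pow_left : q ^ ((x - i) * j) = q ^ ((x - (i + 1)) * j) * q ^ j := by
    rw [← zpow_natCast, ← zpow_add₀ hf.ne_zero, ← add_one_mul, ← sub_sub, sub_add_cancel]
  have pow_right : q ^ ((x - i) * (j + 1)) = q ^ ((x - i) * j) * q ^ (x - i) := by
    rw [← zpow_add₀ hf.ne_zero, mul_add_one]
  rw [cocycle, pow_right]
  linear_combination
    qBinom f y j * qBinom f x (i + 1) * f (i + 1) * pow_left -
    q ^ ((x - i) * j) * qBinom f y j * hf.qBinom_succ_mul x i -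
    q ^ ((x - i) * j) * q ^ (x - i) * qBinom f x i * hf.qBinom_succ_mul y j

/-- Splits `[i + j] = [j] + q ^ j [i]` inside a convolution; the boundary terms vanish since
`[0] = 0`. -/
theorem sum_antidiagonal_succ_mul (hf : IsQInteger q f) (T : ℕ → ℕ → F) (n : ℕ) :
    (∑ p ∈ antidiagonal (n + 1), T p.1 p.2) * f (n + 1) =
      ∑ p ∈ antidiagonal n,
        (T (p.1 + 1) p.2 * (q ^ p.2 * f (p.1 + 1)) + T p.1 (p.2 + 1) * f (p.2 + 1)) := by
  have split : ∀ p ∈ antidiagonal (n + 1),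
      T p.1 p.2 * f (n + 1) = T p.1 p.2 * (q ^ p.2 * f p.1) + T p.1 p.2 * f p.2 := by
    intro p hp
    have cocycle := hf.map_add p.2 p.1
    rw [zpow_natCast, add_comm (p.2 : ℤ), ← Nat.cast_add, mem_antidiagonal.mp hp,
      Nat.cast_succ] at cocycle
    rw [cocycle]
    ring
  rw [sum_mul, sum_congr rfl split, sum_add_distrib, Nat.sum_antidiagonal_succ,
    Nat.sum_antidiagonal_succ', sum_add_distrib]
  simp only [Nat.cast_zero, hf.map_zero, mul_zero, zero_add, Nat.cast_succ]

theorem qVandermonde (hf : IsQInteger q f) (x y : ℤ) (n : ℕ) :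
    qBinom f (x + y) n =
      ∑ p ∈ antidiagonal n, q ^ ((x - p.1) * p.2) * qBinom f x p.1 * qBinom f y p.2 := by
  induction n with
  | zero => simp
  | succ n ih =>
    refine mul_right_cancel₀ (hf.map_succ_ne_zero n) ?_
    rw [hf.qBinom_succ_mul, ih, sum_mul, hf.sum_antidiagonal_succ_mul
      fun i j ↦ q ^ ((x - i) * j) * qBinom f x i * qBinom f y j]
    refine sum_congr rfl fun p hp ↦ ?_
    rw [← mem_antidiagonal.mp hp]
    push_cast
    exact hf.qBinom_mul_qBinom_mul_eq_add x y p.1 p.2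

end IsQInteger

theorem lemma_3_2_2_general {q : F} {f : ℤ → F} (hf : IsQInteger q f) (m : ℤ) (a b : ℕ) :
    qBinom f m a * qBinom f m b =
      ∑ c ∈ range (min a b + 1),
        q ^ (((b : ℤ) - c) * ((a : ℤ) - c)) * qBinom f m (a + b - c) *
          qTrinom f c (a - c) (b - c) := by
  have vandermonde : qBinom f m b = ∑ c ∈ range (b + 1),
      q ^ (((a : ℤ) - c) * (b - c : ℕ)) * qBinom f a c * qBinom f (m - a) (b - c) := by
    rw [← Nat.sum_antidiagonal_eq_sum_range_succ fun c j ↦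
      q ^ (((a : ℤ) - c) * j) * qBinom f a c * qBinom f (m - a) j, ← hf.qVandermonde,
      add_sub_cancel]
  have truncate : range (min a b + 1) ⊆ range (b + 1) := by
    gcongr
    exact min_le_right a b
  rw [vandermonde, mul_sum, ← sum_subset truncate fun c hcb hc ↦ ?_]
  · refine sum_congr rfl fun c hc ↦ ?_
    obtain ⟨hca, hcb⟩ : c ≤ a ∧ c ≤ b := by simpa [Nat.lt_succ_iff] using hc
    obtain ⟨i, rfl⟩ := Nat.exists_eq_add_of_le hca
    obtain ⟨j, rfl⟩ := Nat.exists_eq_add_of_le hcb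
    have collapse := hf.qBinom_add_mul_eq_mul_qTrinom m c i j
    rw [show c + i + (c + j) - c = c + i + j by omega]
    simp only [Nat.cast_add, add_sub_cancel_left, Nat.add_sub_cancel_left]
    rw [mul_comm (j : ℤ)]
    linear_combination q ^ ((i : ℤ) * j) * collapse
  · have hac : a < c := by
      simp only [mem_range] at hcb hc
      omega
    rw [hf.qBinom_eq_zero_of_lt hac, mul_zero, zero_mul, mul_zero]

end Field

theorem ratFunc_X_pow_ne_one {k : Type*} [Field k] {n : ℕ} (hn : 0 < n) :
    (RatFunc.X : RatFunc k) ^ n ≠ 1 :=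
  fun h ↦ RatFunc.transcendental_X.pow hn (h ▸ isAlgebraic_one)

theorem isQInteger_qqint : IsQInteger (v ^ (2 : ℤ)) qqint := by
  have not_root_of_unity (n : ℕ) : (v ^ (2 : ℤ)) ^ (n + 1) ≠ 1 := by
    rw [zpow_ofNat, ← pow_mul]
    exact ratFunc_X_pow_ne_one (by positivity)
  have qqint_eq : qqint = fun i ↦ ((v ^ (2 : ℤ)) ^ i - 1) / (v ^ (2 : ℤ) - 1) := by
    simp only [← zpow_mul]
    rfl
  rw [qqint_eq]
  exact isQInteger_zpow_sub_one_div (zpow_ne_zero 2 RatFunc.X_ne_zero) not_root_of_unity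

/-- Lemma 3.2(2):
`[[m ∣ a]]·[[m ∣ b]] = ∑_{c=0}^{min(a,b)} v^{2(b-c)(a-c)} [[m ∣ a+b-c]] [[a+b-c ; c, a-c, b-c]]`. -/
theorem lemma_3_2_2 (m : ℤ) (a b : ℕ) :
    qqbinom m a * qqbinom m b =
      ∑ c ∈ Finset.range (min a b + 1),
        v ^ (2 * ((b : ℤ) - (c : ℤ)) * ((a : ℤ) - (c : ℤ))) * qqbinom m (a + b - c) *
          qqtri c (a - c) (b - c) := by
  simp only [mul_assoc (2 : ℤ), zpow_mul v 2]
  exact lemma_3_2_2_general isQInteger_qqint m a b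
end
end

section
/- (Corollary 3.3(2)) Let n ≥ 1. For all λ, μ ∈ ℕⁿ and every α ∈ ℤⁿ, the following identity holds in ℚ(v): [α ∣ λ] · [α ∣ μ] = Σ_{γ ∈ ℕⁿ, γ ≤ λ, γ ≤ μ} v^{λ·μ − α·γ} · (∏_{i=1}^n [λ_i+μ_i−γ_i ; γ_i, λ_i−γ_i, μ_i−γ_i]) · [α ∣ λ+μ−γ]. -/
open Finset

noncomputable section

/-- `[i] = (v^i - v^{-i})/(v - v^{-1})`. -/
def qint (i : ℤ) : K := (v ^ i - v ^ (-i)) / (v - v⁻¹)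

/-- `[t]! = [1][2]⋯[t]`. -/
def qfact (t : ℕ) : K := ∏ s ∈ Finset.range t, qint (s + 1)

/-- The Gaussian binomial coefficient `[N ∣ t] = ([N][N-1]⋯[N-t+1])/[t]!`. -/
def qbinom (N : ℤ) (t : ℕ) : K := (∏ s ∈ Finset.range t, qint (N - s)) / qfact t

/-- The q-trinomial coefficient `[a+b+c ; a, b, c] = [a+b+c]!/([a]![b]![c]!)`. -/
def qtri (a b c : ℕ) : K := qfact (a + b + c) / (qfact a * qfact b * qfact c)

/-- `[μ ∣ λ] = ∏ i, [μ i ∣ λ i]` for `μ ∈ ℤⁿ`, `λ ∈ ℕⁿ`. -/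
def qbinomV {n : ℕ} (μ : Fin n → ℤ) (lam : Fin n → ℕ) : K := ∏ i, qbinom (μ i) (lam i)

/-- `μ · δ = ∑ i, μ i * δ i`. -/
def dotZ {n : ℕ} (a b : Fin n → ℤ) : ℤ := ∑ i, a i * b i

/-!
Summing over each coordinate separately reduces the identity to one variable, where `[a ∣ m]` is
expanded by the `q`-Vandermonde formula for `a = l + (a - l)`; multiplied by `[a ∣ l]`, each
summand `[l ∣ c] [a - l ∣ m - c]` turns into a trinomial coefficient times `[a ∣ l + m - c]`.
The Vandermonde formula at integer upper indices holds because both sides satisfy the same Pascal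
recurrence, which can be run in both directions along `ℤ`.
-/

section QuantumNumbers

variable {F : Type*} [Field F]

/-- The balanced quantum integer `[i]` at the parameter `q`; at `q = 1` division by zero makes it
`0` rather than `i`. -/
def quantumInt (q : F) (i : ℤ) : F := (q ^ i - q ^ (-i)) / (q - q⁻¹)

/-- The quantum factorial `[t]! = [1] [2] ⋯ [t]`. -/
def quantumFactorial (q : F) (t : ℕ) : F := ∏ s ∈ range t, quantumInt q (s + 1)

/-- The quantum falling factorial `[N] [N - 1] ⋯ [N - t + 1]`. -/
def quantumDescFactorial (q : F) (N : ℤ) (t : ℕ) : F := ∏ s ∈ range t, quantumInt q (N - s)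

/-- The Gaussian binomial coefficient `[N ∣ t]`, with an arbitrary integer as upper index. -/
def quantumChoose (q : F) (N : ℤ) (t : ℕ) : F :=
  quantumDescFactorial q N t / quantumFactorial q t

/-- The quantum trinomial coefficient `[a + b + c ; a, b, c]`. -/
def quantumTrinomial (q : F) (a b c : ℕ) : F :=
  quantumFactorial q (a + b + c) /
    (quantumFactorial q a * quantumFactorial q b * quantumFactorial q c)

variable {q : F}

lemma zpow_sub_zpow_neg_ne_zero (hq₀ : q ≠ 0) (hq : ¬IsOfFinOrder q) {i : ℤ} (hi : i ≠ 0) :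
    q ^ i - q ^ (-i) ≠ 0 := by
  intro h
  have h_pow : q ^ (i + i) = 1 := by
    rw [zpow_add₀ hq₀]
    nth_rw 1 [sub_eq_zero.1 h]
    rw [← zpow_add₀ hq₀, neg_add_cancel, zpow_zero]
  exact hq (isOfFinOrder_iff_zpow_eq_one.2 ⟨i + i, by omega, h_pow⟩)

lemma quantumInt_ne_zero (hq₀ : q ≠ 0) (hq : ¬IsOfFinOrder q) {i : ℤ} (hi : i ≠ 0) :
    quantumInt q i ≠ 0 := by
  have h_den : q - q⁻¹ ≠ 0 := by simpa using zpow_sub_zpow_neg_ne_zero hq₀ hq one_ne_zero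
  exact div_ne_zero (zpow_sub_zpow_neg_ne_zero hq₀ hq hi) h_den

lemma quantumFactorial_ne_zero (hq₀ : q ≠ 0) (hq : ¬IsOfFinOrder q) (t : ℕ) :
    quantumFactorial q t ≠ 0 :=
  prod_ne_zero_iff.2 fun _ _ ↦ quantumInt_ne_zero hq₀ hq (by omega)

lemma quantumFactorial_succ (q : F) (t : ℕ) :
    quantumFactorial q (t + 1) = quantumFactorial q t * quantumInt q (t + 1) :=
  prod_range_succ _ _

lemma quantumDescFactorial_add (q : F) (N : ℤ) (s t : ℕ) :
    quantumDescFactorial q N (s + t) =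
      quantumDescFactorial q N s * quantumDescFactorial q (N - s) t := by
  simp only [quantumDescFactorial, prod_range_add, Nat.cast_add, sub_sub]

lemma quantumDescFactorial_one (q : F) (N : ℤ) : quantumDescFactorial q N 1 = quantumInt q N := by
  simp [quantumDescFactorial]

lemma quantumDescFactorial_natCast_self (q : F) (t : ℕ) :
    quantumDescFactorial q t t = quantumFactorial q t := by
  rw [quantumDescFactorial, quantumFactorial, ← prod_range_reflect]
  refine prod_congr rfl fun s hs ↦ congrArg (quantumInt q) ?_
  have := mem_range.1 hs
  omega

lemma quantumChoose_zero_right (q : F) (N : ℤ) : quantumChoose q N 0 = 1 := by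
  simp [quantumChoose, quantumDescFactorial, quantumFactorial]

lemma quantumChoose_natCast_eq_zero_of_lt (q : F) {l c : ℕ} (h : l < c) :
    quantumChoose q l c = 0 := by
  have h_desc : quantumDescFactorial q l c = 0 :=
    prod_eq_zero (mem_range.2 h) (by simp [quantumInt])
  rw [quantumChoose, h_desc, zero_div]

lemma quantumInt_add_one (hq₀ : q ≠ 0) (N t : ℤ) :
    quantumInt q (N + 1) =
      q ^ (t + 1) * quantumInt q (N - t) + q ^ (t - N) * quantumInt q (t + 1) := by
  simp only [quantumInt, ← mul_div_assoc, ← add_div, mul_sub, ← zpow_add₀ hq₀]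
  ring_nf

lemma quantumChoose_succ_succ (hq₀ : q ≠ 0) (hq : ¬IsOfFinOrder q) (N : ℤ) (t : ℕ) :
    quantumChoose q (N + 1) (t + 1) =
      q ^ (t + 1 : ℤ) * quantumChoose q N (t + 1) + q ^ (t - N) * quantumChoose q N t := by
  have h_first : quantumDescFactorial q (N + 1) (t + 1) =
      quantumInt q (N + 1) * quantumDescFactorial q N t := by
    rw [add_comm t, quantumDescFactorial_add, quantumDescFactorial_one, Nat.cast_one,
      add_sub_cancel_right]
  have h_last : quantumDescFactorial q N (t + 1) =
      quantumDescFactorial q N t * quantumInt q (N - t) := by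
    rw [quantumDescFactorial_add, quantumDescFactorial_one]
  have h_fact := quantumFactorial_ne_zero hq₀ hq t
  have h_int : quantumInt q (t + 1) ≠ 0 := quantumInt_ne_zero hq₀ hq (by omega)
  simp only [quantumChoose]
  rw [h_first, h_last, quantumInt_add_one hq₀ N t, quantumFactorial_succ]
  field_simp

lemma eq_of_pascal_recurrence {f g a b : ℤ → ℕ → F} (ha : ∀ N t, a N t ≠ 0)
    (hf : ∀ N t, f (N + 1) (t + 1) = a N t * f N (t + 1) + b N t * f N t)
    (hg : ∀ N t, g (N + 1) (t + 1) = a N t * g N (t + 1) + b N t * g N t)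
    (h_left : ∀ t, f 0 t = g 0 t) (h_right : ∀ N, f N 0 = g N 0) (N : ℤ) (t : ℕ) :
    f N t = g N t := by
  induction t generalizing N with
  | zero => exact h_right N
  | succ t ih =>
    have h_step (N : ℤ) : f (N + 1) (t + 1) = g (N + 1) (t + 1) ↔ f N (t + 1) = g N (t + 1) := by
      rw [hf, hg, ih, add_left_inj, mul_right_inj' (ha N t)]
    induction N using Int.induction_on with
    | zero => exact h_left _
    | succ N ihN => exact (h_step _).2 ihN
    | pred N ihN => exact (h_step _).1 (by rwa [sub_add_cancel])

/-- The right-hand side of the `q`-Vandermonde formula for `[x + y ∣ m]`. -/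
def quantumVandermondeSum (q : F) (x y : ℤ) (m : ℕ) : F :=
  ∑ p ∈ antidiagonal m,
    q ^ (x * p.2 - y * p.1) * quantumChoose q x p.1 * quantumChoose q y p.2

lemma quantumVandermondeSum_zero_left (q : F) (y : ℤ) (m : ℕ) :
    quantumVandermondeSum q 0 y m = quantumChoose q y m := by
  rw [quantumVandermondeSum, sum_eq_single (0, m)]
  · simp [quantumChoose_zero_right]
  · rintro ⟨c, d⟩ h_mem h_ne
    have hc : 0 < c := by
      rw [HasAntidiagonal.mem_antidiagonal] at h_mem
      grind
    have h_choose : quantumChoose q 0 c = 0 := mod_cast quantumChoose_natCast_eq_zero_of_lt q hc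
    simp [h_choose]
  · simp

lemma quantumVandermondeSum_succ_succ (hq₀ : q ≠ 0) (hq : ¬IsOfFinOrder q) (x y : ℤ) (m : ℕ) :
    quantumVandermondeSum q (x + 1) y (m + 1) =
      q ^ (m + 1 : ℤ) * quantumVandermondeSum q x y (m + 1) +
        q ^ (m - (x + y)) * quantumVandermondeSum q x y m := by
  simp only [quantumVandermondeSum]
  rw [Nat.sum_antidiagonal_succ, Nat.sum_antidiagonal_succ, mul_add, mul_sum, mul_sum, add_assoc,
    ← sum_add_distrib]
  congr 1
  · simp only [quantumChoose_zero_right, ← mul_assoc, ← zpow_add₀ hq₀]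
    push_cast
    ring_nf
  · refine sum_congr rfl fun p hp ↦ ?_
    rw [quantumChoose_succ_succ hq₀ hq, ← HasAntidiagonal.mem_antidiagonal.1 hp]
    simp only [mul_add, add_mul, ← mul_assoc, ← zpow_add₀ hq₀]
    push_cast
    ring_nf

theorem quantumChoose_add (hq₀ : q ≠ 0) (hq : ¬IsOfFinOrder q) (x y : ℤ) (m : ℕ) :
    quantumChoose q (x + y) m = quantumVandermondeSum q x y m := by
  refine eq_of_pascal_recurrence (f := fun x m ↦ quantumChoose q (x + y) m)
    (g := fun x m ↦ quantumVandermondeSum q x y m) (fun _ m ↦ zpow_ne_zero (m + 1) hq₀)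
    (fun x m ↦ ?_) (fun x m ↦ quantumVandermondeSum_succ_succ hq₀ hq x y m)
    (fun m ↦ ?_) (fun x ↦ ?_) x m
  · rw [add_right_comm, quantumChoose_succ_succ hq₀ hq]
  · rw [zero_add, quantumVandermondeSum_zero_left]
  · simp [quantumVandermondeSum, quantumChoose_zero_right]

lemma quantumChoose_mul_mul_eq_quantumTrinomial_mul (hq₀ : q ≠ 0) (hq : ¬IsOfFinOrder q)
    (a : ℤ) (b c d : ℕ) :
    quantumChoose q a (b + c) * quantumChoose q (b + c : ℕ) b *
        quantumChoose q (a - (b + c : ℕ)) d =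
      quantumTrinomial q b c d * quantumChoose q a (b + c + d) := by
  have h_desc : quantumDescFactorial q (b + c : ℕ) b * quantumFactorial q c =
      quantumFactorial q (b + c) := by
    rw [← quantumDescFactorial_natCast_self q (b + c), quantumDescFactorial_add, Nat.cast_add,
      add_sub_cancel_left, quantumDescFactorial_natCast_self]
  have h_ne := quantumFactorial_ne_zero hq₀ hq
  have hb := h_ne b
  have hc := h_ne c
  have hd := h_ne d
  have hbc := h_ne (b + c)
  have hbcd := h_ne (b + c + d)
  simp only [quantumChoose, quantumTrinomial]
  rw [quantumDescFactorial_add q a (b + c) d]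
  field_simp
  rw [← h_desc]
  ring

theorem quantumChoose_mul_quantumChoose (hq₀ : q ≠ 0) (hq : ¬IsOfFinOrder q) (a : ℤ) (l m : ℕ) :
    quantumChoose q a l * quantumChoose q a m =
      ∑ c ∈ Iic l ∩ Iic m,
        q ^ ((l : ℤ) * m - a * c) * quantumTrinomial q c (l - c) (m - c) *
          quantumChoose q a (l + m - c) := by
  have h_vandermonde := quantumChoose_add hq₀ hq l (a - l) m
  rw [add_sub_cancel, quantumVandermondeSum, Nat.sum_antidiagonal_eq_sum_range_succ_mk]
    at h_vandermonde
  rw [h_vandermonde, mul_sum]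
  symm
  apply sum_subset_zero_on_sdiff
  · intro c hc
    simp only [mem_inter, mem_Iic] at hc
    exact mem_range.2 (by omega)
  · intro c hc
    have h_lt : l < c := by
      simp only [mem_sdiff, mem_range, mem_inter, mem_Iic] at hc
      omega
    simp [quantumChoose_natCast_eq_zero_of_lt q h_lt]
  · intro c hc
    simp only [mem_inter, mem_Iic] at hc
    obtain ⟨b, rfl⟩ := Nat.exists_eq_add_of_le hc.1
    obtain ⟨d, rfl⟩ := Nat.exists_eq_add_of_le hc.2
    have h_trinomial := quantumChoose_mul_mul_eq_quantumTrinomial_mul hq₀ hq a c b d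
    have h_lower : c + b + (c + d) - c = c + b + d := by omega
    have h_exponent : ((c + b : ℕ) : ℤ) * (c + d : ℕ) - a * c =
        (c + b : ℕ) * d - (a - (c + b : ℕ)) * c := by push_cast; ring
    rw [h_lower, h_exponent, Nat.add_sub_cancel_left, Nat.add_sub_cancel_left, mul_assoc,
      ← h_trinomial]
    ring

lemma zpow_sum_eq_prod_zpow (hq₀ : q ≠ 0) {ι : Type*} (s : Finset ι) (f : ι → ℤ) :
    q ^ ∑ i ∈ s, f i = ∏ i ∈ s, q ^ f i := by
  induction s using Finset.cons_induction with
  | empty => simp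
  | cons i s hi ih => rw [sum_cons, prod_cons, zpow_add₀ hq₀, ih]

theorem corollary_3_3_2_general (hq₀ : q ≠ 0) (hq : ¬IsOfFinOrder q) {ι : Type*} [Fintype ι]
    [DecidableEq ι] (l m : ι → ℕ) (a : ι → ℤ) :
    (∏ i, quantumChoose q (a i) (l i)) * ∏ i, quantumChoose q (a i) (m i) =
      ∑ c ∈ Iic l ∩ Iic m,
        q ^ (∑ i, (l i : ℤ) * m i - ∑ i, a i * c i) *
          (∏ i, quantumTrinomial q (c i) (l i - c i) (m i - c i)) *
          ∏ i, quantumChoose q (a i) (l i + m i - c i) := by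
  have h_box : Iic l ∩ Iic m = Fintype.piFinset fun i ↦ Iic (l i) ∩ Iic (m i) :=
    (Fintype.piFinset_inter _ _).symm
  simp only [← prod_mul_distrib, ← sum_sub_distrib, zpow_sum_eq_prod_zpow hq₀,
    quantumChoose_mul_quantumChoose hq₀ hq, prod_univ_sum, h_box]

end QuantumNumbers

lemma not_isOfFinOrder_ratFunc_X {k : Type*} [Field k] : ¬IsOfFinOrder (RatFunc.X : RatFunc k) := by
  intro h
  obtain ⟨n, hn, h_pow⟩ := isOfFinOrder_iff_pow_eq_one.1 h
  exact RatFunc.transcendental_X (IsAlgebraic.of_pow hn (h_pow ▸ isAlgebraic_one))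

/-- Corollary 3.3(2):
`[α ∣ λ]·[α ∣ μ] = ∑_{γ ≤ λ, γ ≤ μ} v^{λ·μ - α·γ}
  (∏ i, [λ_i+μ_i-γ_i ; γ_i, λ_i-γ_i, μ_i-γ_i]) [α ∣ λ+μ-γ]`. -/
theorem corollary_3_3_2 (n : ℕ) (hn : 1 ≤ n) (lam μ : Fin n → ℕ) (α : Fin n → ℤ) :
    qbinomV α lam * qbinomV α μ =
      ∑ γ ∈ Finset.Iic lam ∩ Finset.Iic μ,
        v ^ (dotZ (fun i => (lam i : ℤ)) (fun i => (μ i : ℤ)) -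
              dotZ α (fun i => (γ i : ℤ))) *
          (∏ i, qtri (γ i) (lam i - γ i) (μ i - γ i)) *
          qbinomV α (fun i => lam i + μ i - γ i) :=
  -- At `q = RatFunc.X` the two families of quantum numbers agree definitionally.
  corollary_3_3_2_general RatFunc.X_ne_zero not_isOfFinOrder_ratFunc_X lam μ α
end
end

section
/- (Key identity in the proof of Lemma 4.1, scalar form) For all integers a, α ∈ ℤ and all natural numbers μ, λ ∈ ℕ, the following identity holds in ℚ(v): [a+α ∣ μ] · [α ∣ λ] = Σ_{j=0}^{μ} Σ_{β=0}^{min(λ, μ−j)} v^{(a+λ)(μ−j) − α(j+β)} · [a ∣ j] · [α ∣ λ+μ−j−β] · [λ+μ−j−β ; β, λ−β, μ−j−β]. -/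
open Finset

noncomputable section

/-!
Both summation indices come from the `q`-Vandermonde identity
`[a+b ∣ m] = ∑_{i+k=m} v^{ak-bi} [a ∣ i] [b ∣ k]`. Applied to `[a+α ∣ μ]` it produces `j` and
reduces the claim to expanding `[α ∣ m] [α ∣ λ]` with `m = μ - j`. Applied again to
`α = λ + (α - λ)` it produces `β`, and `[α ∣ λ] [α-λ ∣ m-β]` equals `[α ∣ λ+m-β]` times a Gaussian
binomial coefficient that combines with `[λ ∣ β]` into the trinomial one; the terms with `β > λ`
vanish.

The Vandermonde identity itself is proved by induction on `m`, multiplying by `[m+1]` and splitting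
`[m+1]` and `[a+b-m]` by the addition formula for `[x+y]`.
-/

lemma ratFunc_intDegree_zpow {F : Type*} [Field F] {x : RatFunc F} (hx : x ≠ 0) (i : ℤ) :
    (x ^ i).intDegree = i * x.intDegree := by
  induction i with
  | zero => simp
  | succ n ih => rw [zpow_add_one₀ hx, RatFunc.intDegree_mul (zpow_ne_zero _ hx) hx, ih]; ring
  | pred n ih =>
    rw [zpow_sub_one₀ hx, RatFunc.intDegree_mul (zpow_ne_zero _ hx) (inv_ne_zero hx), ih,
      RatFunc.intDegree_inv]
    ring

lemma v_ne_zero : v ≠ 0 := RatFunc.X_ne_zero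

lemma intDegree_v : v.intDegree = 1 := RatFunc.intDegree_X

lemma v_zpow_injective : Function.Injective fun i : ℤ => v ^ i := fun i j h => by
  simpa only [ratFunc_intDegree_zpow v_ne_zero, intDegree_v, mul_one] using
    congrArg RatFunc.intDegree h

lemma v_zpow_sub_zpow_neg_ne_zero {i : ℤ} (hi : i ≠ 0) : v ^ i - v ^ (-i) ≠ 0 :=
  sub_ne_zero.mpr (v_zpow_injective.ne (by omega))

lemma qint_zero : qint 0 = 0 := by simp [qint]

lemma qint_ne_zero {i : ℤ} (hi : i ≠ 0) : qint i ≠ 0 :=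
  div_ne_zero (v_zpow_sub_zpow_neg_ne_zero hi) (by
    simpa using v_zpow_sub_zpow_neg_ne_zero one_ne_zero)

lemma qint_natCast_succ_ne_zero (n : ℕ) : qint (n + 1) ≠ 0 := qint_ne_zero (by omega)

lemma qint_add (x y : ℤ) : qint (x + y) = v ^ y * qint x + v ^ (-x) * qint y := by
  have h : v ^ (x + y) - v ^ (-(x + y)) =
      v ^ y * (v ^ x - v ^ (-x)) + v ^ (-x) * (v ^ y - v ^ (-y)) := by
    rw [neg_add, zpow_add₀ v_ne_zero, zpow_add₀ v_ne_zero]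
    ring
  simp only [qint, h, add_div, mul_div_assoc]

lemma qfact_succ (n : ℕ) : qfact (n + 1) = qfact n * qint (n + 1) :=
  prod_range_succ _ _

lemma qfact_ne_zero (n : ℕ) : qfact n ≠ 0 :=
  prod_ne_zero_iff.mpr fun s _ => qint_natCast_succ_ne_zero s

lemma qbinom_zero_right (N : ℤ) : qbinom N 0 = 1 := by simp [qbinom, qfact]

lemma qbinom_mul_qfact (N : ℤ) (t : ℕ) :
    qbinom N t * qfact t = ∏ s ∈ range t, qint (N - s) :=
  div_mul_cancel₀ _ (qfact_ne_zero t)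

lemma qint_succ_mul_qbinom_succ (N : ℤ) (t : ℕ) :
    qint (t + 1) * qbinom N (t + 1) = qint (N - t) * qbinom N t := by
  apply mul_right_cancel₀ (qfact_ne_zero t)
  calc qint (t + 1) * qbinom N (t + 1) * qfact t
      = qbinom N (t + 1) * qfact (t + 1) := by rw [qfact_succ]; ring
    _ = qint (N - t) * (qbinom N t * qfact t) := by
        rw [qbinom_mul_qfact, qbinom_mul_qfact, prod_range_succ_comm]
    _ = qint (N - t) * qbinom N t * qfact t := (mul_assoc _ _ _).symm

lemma qbinom_natCast_self (n : ℕ) : qbinom n n = 1 := by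
  have h : ∏ s ∈ range n, qint ((n : ℤ) - s) = qfact n := by
    rw [qfact, ← prod_range_reflect]
    refine prod_congr rfl fun s hs => congrArg qint ?_
    have := mem_range.mp hs
    omega
  rw [qbinom, h, div_self (qfact_ne_zero n)]

lemma qbinom_natCast_of_lt {n k : ℕ} (h : n < k) : qbinom n k = 0 := by
  rw [qbinom, prod_eq_zero (mem_range.mpr h) (by rw [sub_self, qint_zero]), zero_div]

lemma qbinom_add_right_mul_qfact (N : ℤ) (s t : ℕ) :
    qbinom N (s + t) * qfact (s + t) = qbinom N s * qfact s * (qbinom (N - s) t * qfact t) := by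
  simp only [qbinom_mul_qfact, prod_range_add, Nat.cast_add, sub_sub]

lemma qfact_add (s t : ℕ) :
    qfact (s + t) = qbinom (s + t : ℕ) s * (qfact s * qfact t) := by
  have h := qbinom_add_right_mul_qfact (s + t : ℕ) s t
  rw [qbinom_natCast_self, Nat.cast_add, add_sub_cancel_left, qbinom_natCast_self] at h
  rw [Nat.cast_add]
  linear_combination h

lemma qbinom_mul_qtri (N : ℤ) (r s t : ℕ) :
    qbinom N (r + s + t) * qtri r s t =
      qbinom (r + s : ℕ) r * (qbinom N (r + s) * qbinom (N - (r + s : ℕ)) t) := by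
  have := qfact_ne_zero r
  have := qfact_ne_zero s
  have := qfact_ne_zero t
  rw [qtri, mul_div_assoc', qbinom_add_right_mul_qfact, qfact_add]
  field_simp

lemma qint_succ_mul_sum_antidiagonal (f : ℕ → ℕ → K) (m : ℕ) :
    qint (m + 1) * ∑ p ∈ antidiagonal (m + 1), f p.1 p.2 =
      ∑ p ∈ antidiagonal m, (v ^ (p.2 : ℤ) * qint (p.1 + 1) * f (p.1 + 1) p.2 +
        v ^ (-p.1 : ℤ) * qint (p.2 + 1) * f p.1 (p.2 + 1)) := by
  have hsplit : ∀ p ∈ antidiagonal (m + 1), qint (m + 1) * f p.1 p.2 =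
      v ^ (p.2 : ℤ) * qint p.1 * f p.1 p.2 + v ^ (-p.1 : ℤ) * qint p.2 * f p.1 p.2 := by
    intro p hp
    rw [← Nat.cast_add_one, ← mem_antidiagonal.mp hp, Nat.cast_add, qint_add, add_mul]
  rw [mul_sum, sum_congr rfl hsplit, sum_add_distrib, Nat.sum_antidiagonal_succ,
    Nat.sum_antidiagonal_succ', sum_add_distrib]
  simp only [Nat.cast_zero, Nat.cast_succ, qint_zero, mul_zero, zero_mul, zero_add]

/-- The summand `v^{ak-bi} [a ∣ i] [b ∣ k]` of the `q`-Vandermonde expansion of `[a+b ∣ i+k]`. -/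
def vandermondeTerm (a b : ℤ) (i k : ℕ) : K :=
  v ^ (a * k - b * i) * (qbinom a i * qbinom b k)

lemma qint_mul_vandermondeTerm (a b : ℤ) (i k : ℕ) :
    qint (a + b - (i + k : ℕ)) * vandermondeTerm a b i k =
      v ^ (k : ℤ) * qint (i + 1) * vandermondeTerm a b (i + 1) k +
        v ^ (-i : ℤ) * qint (k + 1) * vandermondeTerm a b i (k + 1) := by
  have hint : qint (a + b - (i + k : ℕ)) =
      v ^ (k - b) * qint (a - i) + v ^ (a - i) * qint (b - k) := by
    rw [show a + b - (i + k : ℕ) = (b - k) + (a - i) by push_cast; ring, qint_add, neg_sub,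
      add_comm]
  have hleft : v ^ (k : ℤ) * v ^ (a * k - b * (i + 1 : ℕ)) = v ^ (a * k - b * i) * v ^ (k - b) := by
    simp only [← zpow_add₀ v_ne_zero]
    congr 1; push_cast; ring
  have hright : v ^ (-i : ℤ) * v ^ (a * (k + 1 : ℕ) - b * i) =
      v ^ (a * k - b * i) * v ^ (a - i) := by
    simp only [← zpow_add₀ v_ne_zero]
    congr 1; push_cast; ring
  have ha := qint_succ_mul_qbinom_succ a i
  have hb := qint_succ_mul_qbinom_succ b k
  simp only [vandermondeTerm]
  calc _ = v ^ (a * k - b * i) * v ^ (k - b) * (qint (a - i) * qbinom a i) * qbinom b k +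
        v ^ (a * k - b * i) * v ^ (a - i) * qbinom a i * (qint (b - k) * qbinom b k) := by
        rw [hint]; ring
    _ = _ := by rw [← ha, ← hb, ← hleft, ← hright]; ring

theorem qbinom_add (a b : ℤ) (m : ℕ) :
    qbinom (a + b) m = ∑ p ∈ antidiagonal m, vandermondeTerm a b p.1 p.2 := by
  induction m with
  | zero => simp [vandermondeTerm, qbinom_zero_right]
  | succ m ih =>
    apply mul_left_cancel₀ (qint_natCast_succ_ne_zero m)
    rw [qint_succ_mul_qbinom_succ, ih, mul_sum, qint_succ_mul_sum_antidiagonal]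
    refine sum_congr rfl fun p hp => ?_
    rw [← qint_mul_vandermondeTerm, mem_antidiagonal.mp hp]

lemma vandermondeTerm_natCast_sub_mul_qbinom (N : ℤ) (r s t : ℕ) :
    vandermondeTerm (r + s : ℕ) (N - (r + s : ℕ)) r t * qbinom N (r + s) =
      v ^ ((r + s : ℕ) * (r + t : ℕ) - N * r) * (qbinom N (r + s + t) * qtri r s t) := by
  have hexp : ((r + s : ℕ) : ℤ) * t - (N - (r + s : ℕ)) * r =
      (r + s : ℕ) * (r + t : ℕ) - N * r := by push_cast; ring
  rw [vandermondeTerm, hexp, qbinom_mul_qtri]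
  ring

theorem qbinom_mul_qbinom (N : ℤ) (m n : ℕ) :
    qbinom N m * qbinom N n =
      ∑ r ∈ range (min n m + 1),
        v ^ (n * m - N * r) * (qbinom N (n + m - r) * qtri r (n - r) (m - r)) := by
  have hvanish : ∀ r ∈ range (m + 1), r ∉ range (min n m + 1) →
      vandermondeTerm n (N - n) r (m - r) * qbinom N n = 0 := by
    intro r hr hr'
    simp only [mem_range] at hr hr'
    rw [vandermondeTerm, qbinom_natCast_of_lt (by omega), zero_mul, mul_zero, zero_mul]
  calc qbinom N m * qbinom N n
      = ∑ r ∈ range (m + 1), vandermondeTerm n (N - n) r (m - r) * qbinom N n := by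
        rw [← Nat.sum_antidiagonal_eq_sum_range_succ
          (fun r t => vandermondeTerm n (N - n) r t * qbinom N n), ← sum_mul, ← qbinom_add,
          add_sub_cancel]
    _ = ∑ r ∈ range (min n m + 1), vandermondeTerm n (N - n) r (m - r) * qbinom N n :=
        (sum_subset (range_mono (by omega)) hvanish).symm
    _ = _ := by
        refine sum_congr rfl fun r hr => ?_
        have hrmin := mem_range.mp hr
        obtain ⟨s, rfl⟩ := Nat.exists_eq_add_of_le (show r ≤ n by omega)
        obtain ⟨t, rfl⟩ := Nat.exists_eq_add_of_le (show r ≤ m by omega)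
        rw [show r + s + (r + t) - r = r + s + t by omega, Nat.add_sub_cancel_left,
          Nat.add_sub_cancel_left, vandermondeTerm_natCast_sub_mul_qbinom]

/-- The key identity in the proof of Lemma 4.1 (scalar form):
`[a+α ∣ μ]·[α ∣ λ] = ∑_{j=0}^{μ} ∑_{β=0}^{min(λ,μ-j)}
  v^{(a+λ)(μ-j) - α(j+β)} [a ∣ j] [α ∣ λ+μ-j-β] [λ+μ-j-β ; β, λ-β, μ-j-β]`. -/
theorem lemma_4_1_key (a α : ℤ) (μ lam : ℕ) :
    qbinom (a + α) μ * qbinom α lam =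
      ∑ j ∈ Finset.range (μ + 1), ∑ β ∈ Finset.range (min lam (μ - j) + 1),
        v ^ ((a + (lam : ℤ)) * ((μ : ℤ) - (j : ℤ)) - α * ((j : ℤ) + (β : ℤ))) *
          qbinom a j * qbinom α (lam + μ - j - β) * qtri β (lam - β) (μ - j - β) := by
  rw [qbinom_add, Nat.sum_antidiagonal_eq_sum_range_succ (vandermondeTerm a α), sum_mul]
  refine sum_congr rfl fun j hj => ?_
  have hjμ : j ≤ μ := mem_range_succ_iff.mp hj
  rw [vandermondeTerm, mul_assoc, mul_assoc, qbinom_mul_qbinom, mul_sum, mul_sum]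
  refine sum_congr rfl fun β _ => ?_
  have hexp : (a + (lam : ℤ)) * ((μ : ℤ) - (j : ℤ)) - α * ((j : ℤ) + (β : ℤ)) =
      (a * (μ - j : ℕ) - α * j) + (lam * (μ - j : ℕ) - α * β) := by
    rw [Nat.cast_sub hjμ]; ring
  rw [hexp, zpow_add₀ v_ne_zero, Nat.add_sub_assoc hjμ]
  ring
end
end
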